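/- arXiv:2405.15128 — 2 statements merged into one kernel-verified Lean document; each statement's English description precedes it below -/
import Mathlib

section
/- Let d ≥ 1, 0 < λ < d, and k ∈ ℕ ∪ {0}, and let χ be a smooth, compactly supported probability density on ℝ^d. Then there exists a constant C > 0, depending only on d, λ, k and χ, such that for every η > 0 the k-th derivative of V^η = χ^η * Φ satisfies sup_{x ∈ ℝ^d} ‖D^k V^η(x)‖ ≤ C η^{-(λ+k)}, where D^k denotes the k-th iterated (Fréchet) derivative. -/
open MeasureTheory

/-!
Substituting `y = η u` and using the homogeneity of `Φ = ‖·‖ ^ (-λ)` gives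
`V^η(z) = η ^ (-λ) V¹(z / η)`, so everything reduces to bounding `D^k V¹ = Φ * D^k χ`. Since
`λ < d`, `Φ` is integrable on a compact neighbourhood of `0`, where it is paired with the bounded
function `D^k χ`; away from it `Φ` is bounded and `D^k χ` is integrable.
-/

open Asymptotics Filter Module
open ContinuousLinearMap (lsmul lsmul_apply)
open scoped Convolution

section ConvolutionBound

variable {𝕜 G E E' F : Type*} [NontriviallyNormedField 𝕜]
  [NormedAddCommGroup E] [NormedSpace 𝕜 E] [NormedAddCommGroup E'] [NormedSpace 𝕜 E']
  [NormedAddCommGroup F] [NormedSpace ℝ F] [NormedSpace 𝕜 F]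
  [AddCommGroup G] [MeasurableSpace G] {μ : Measure G} [μ.IsAddLeftInvariant] [μ.IsNegInvariant]
  {f : G → E} {g : G → E'}

lemma norm_convolution_le_of_norm_le_compl [MeasurableAdd G] [MeasurableNeg G]
    (L : E →L[𝕜] E' →L[𝕜] F) {K : Set G} {c M : ℝ} (hK : MeasurableSet K)
    (hfK : IntegrableOn f K μ) (hc : 0 ≤ c) (hfc : ∀ t ∉ K, ‖f t‖ ≤ c)
    (hg : Integrable g μ) (hgM : ∀ t, ‖g t‖ ≤ M) (x : G) :
    ‖(f ⋆[L, μ] g) x‖ ≤ ‖L‖ * ((∫ t in K, ‖f t‖ ∂μ) * M + c * ∫ t, ‖g t‖ ∂μ) := by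
  have hfK' : Integrable (K.indicator fun t => ‖f t‖) μ :=
    (integrable_indicator_iff hK).2 hfK.norm
  have hgx : Integrable (fun t => ‖g (x - t)‖) μ := hg.norm.comp_sub_left x
  have norm_mul_le (t : G) :
      ‖f t‖ * ‖g (x - t)‖ ≤ K.indicator (fun t => ‖f t‖) t * M + c * ‖g (x - t)‖ := by
    by_cases ht : t ∈ K
    · rw [Set.indicator_of_mem ht]
      exact le_add_of_le_of_nonneg (by gcongr; exact hgM _) (by positivity)
    · rw [Set.indicator_of_notMem ht, zero_mul, zero_add]
      gcongr
      exact hfc t ht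
  calc ‖(f ⋆[L, μ] g) x‖
      ≤ ∫ t, ‖L‖ * (K.indicator (fun t => ‖f t‖) t * M + c * ‖g (x - t)‖) ∂μ := by
        refine norm_integral_le_of_norm_le
          (((hfK'.mul_const M).add (hgx.const_mul c)).const_mul ‖L‖) (.of_forall fun t => ?_)
        refine (L.le_opNorm₂ _ _).trans ?_
        rw [mul_assoc]
        exact mul_le_mul_of_nonneg_left (norm_mul_le t) (norm_nonneg L)
    _ = ‖L‖ * ((∫ t in K, ‖f t‖ ∂μ) * M + c * ∫ t, ‖g t‖ ∂μ) := by
        rw [integral_const_mul, integral_add (hfK'.mul_const M) (hgx.const_mul c),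
          integral_mul_const, integral_const_mul, integral_indicator hK,
          integral_sub_left_eq_self (fun t => ‖g t‖) μ x]

lemma exists_norm_convolution_le_of_isBigO_one [TopologicalSpace G] [IsTopologicalAddGroup G]
    [T2Space G] [BorelSpace G] [IsFiniteMeasureOnCompacts μ] (L : E →L[𝕜] E' →L[𝕜] F)
    (hf : LocallyIntegrable f μ) (hf_top : f =O[cocompact G] fun _ => (1 : ℝ))
    (hg : Continuous g) (hg_supp : HasCompactSupport g) :
    ∃ C : ℝ, ∀ x, ‖(f ⋆[L, μ] g) x‖ ≤ C := by
  obtain ⟨M, hM⟩ := hg_supp.exists_bound_of_continuous hg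
  obtain ⟨c, hc, hfc⟩ := hf_top.exists_pos
  obtain ⟨K, hK, hfK⟩ := mem_cocompact.1 hfc.bound
  refine ⟨_, norm_convolution_le_of_norm_le_compl L hK.measurableSet
    (hf.integrableOn_isCompact hK) hc.le (fun t ht => ?_)
    (hg.integrable_of_hasCompactSupport hg_supp) hM⟩
  simpa using hfK ht

end ConvolutionBound

lemma comp_convolution_lsmul {G F F' : Type*} [AddGroup G] [MeasurableSpace G] {μ : Measure G}
    [NormedAddCommGroup F] [NormedSpace ℝ F] [NormedAddCommGroup F'] [NormedSpace ℝ F']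
    (e : F ≃L[ℝ] F') (f : G → ℝ) (g : G → F) :
    e ∘ (f ⋆[lsmul ℝ ℝ, μ] g) = f ⋆[lsmul ℝ ℝ, μ] (e ∘ g) := by
  ext1 x
  simp only [Function.comp_apply, convolution_def, lsmul_apply, ← e.integral_comp_comm, map_smul]

section IteratedDerivative

variable {E F : Type*} [NormedAddCommGroup E] [NormedSpace ℝ E]
  [NormedAddCommGroup F] [NormedSpace ℝ F] {k : ℕ}

lemma norm_iteratedFDeriv_smul_comp_smul {h : E → F} (hh : ContDiff ℝ k h) (a r : ℝ) (x : E) :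
    ‖iteratedFDeriv ℝ k (fun z => a • h (r • z)) x‖ =
      ‖a‖ * ‖r‖ ^ k * ‖iteratedFDeriv ℝ k h (r • x)‖ := by
  have hcomp : ContDiff ℝ k (fun z => h (r • z)) := hh.comp (contDiff_const_smul r)
  rw [iteratedFDeriv_const_smul_apply' hcomp.contDiffAt, iteratedFDeriv_comp_const_smul _ hh,
    norm_smul, norm_smul, norm_pow, mul_assoc]

variable [MeasurableSpace E] [BorelSpace E] {μ : Measure E} [SFinite μ] [μ.IsAddLeftInvariant]
  {f : E → ℝ} {g : E → F}

lemma fderiv_convolution_lsmul (hf : LocallyIntegrable f μ) (hg_supp : HasCompactSupport g)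
    (hg : ContDiff ℝ 1 g) :
    fderiv ℝ (f ⋆[lsmul ℝ ℝ, μ] g) = f ⋆[lsmul ℝ ℝ, μ] fderiv ℝ g := by
  ext1 x
  exact (hg_supp.hasFDerivAt_convolution_right (lsmul ℝ ℝ) hf hg x).fderiv

lemma iteratedFDeriv_convolution_lsmul (hf : LocallyIntegrable f μ)
    (hg_supp : HasCompactSupport g) (hg : ContDiff ℝ k g) :
    iteratedFDeriv ℝ k (f ⋆[lsmul ℝ ℝ, μ] g) = f ⋆[lsmul ℝ ℝ, μ] iteratedFDeriv ℝ k g := by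
  induction k with
  | zero =>
    simp only [iteratedFDeriv_zero_eq_comp]
    exact comp_convolution_lsmul
      (continuousMultilinearCurryFin0 ℝ E F).symm.toContinuousLinearEquiv f g
  | succ k ih =>
    have hDg : ContDiff ℝ 1 (iteratedFDeriv ℝ k g) :=
      hg.iteratedFDeriv_right (by norm_cast; omega)
    rw [iteratedFDeriv_succ_eq_comp_left, iteratedFDeriv_succ_eq_comp_left,
      ih (hg.of_le (by norm_cast; omega)),
      fderiv_convolution_lsmul hf (hg_supp.iteratedFDeriv k) hDg]
    exact comp_convolution_lsmul (F := E →L[ℝ] E [×k]→L[ℝ] F) (F' := E [×(k + 1)]→L[ℝ] F)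
      (continuousMultilinearCurryLeftEquiv ℝ (fun _ => E) F).symm.toContinuousLinearEquiv f _

end IteratedDerivative

section Mollification

variable {E : Type*} [NormedAddCommGroup E]

/-- The Riesz kernel `Φ(x) = ‖x‖ ^ (-λ)`. Its value at the origin is `0` if `λ ≠ 0`, and `1` if
`λ = 0`. -/
noncomputable def rieszKernel (lam : ℝ) (x : E) : ℝ :=
  ‖x‖ ^ (-lam)

lemma rieszKernel_nonneg (lam : ℝ) (x : E) : 0 ≤ rieszKernel lam x :=
  Real.rpow_nonneg (norm_nonneg x) _

lemma rieszKernel_isBigO_one [ProperSpace E] {lam : ℝ} (hlam : 0 ≤ lam) :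
    (rieszKernel lam : E → ℝ) =O[cocompact E] fun _ => (1 : ℝ) := by
  refine .of_bound 1 ?_
  filter_upwards [tendsto_norm_cocompact_atTop.eventually_ge_atTop 1] with x hx
  rw [Real.norm_of_nonneg (rieszKernel_nonneg lam x), norm_one, mul_one]
  exact Real.rpow_le_one_of_one_le_of_nonpos hx (neg_nonpos.2 hlam)

variable [NormedSpace ℝ E]

lemma rieszKernel_smul (lam : ℝ) {η : ℝ} (hη : 0 ≤ η) (x : E) :
    rieszKernel lam (η • x) = η ^ (-lam) * rieszKernel lam x := by
  rw [rieszKernel, norm_smul, Real.norm_of_nonneg hη, Real.mul_rpow hη (norm_nonneg x),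
    rieszKernel]

variable {F : Type*} [NormedAddCommGroup F] [NormedSpace ℝ F]

/-- The rescaling `χ^η(x) = η ^ (-d) χ(x / η)` of a function on a `d`-dimensional space, which
preserves its integral when `0 < η`. -/
noncomputable def mollifier (χ : E → F) (η : ℝ) (x : E) : F :=
  η ^ (-(finrank ℝ E : ℝ)) • χ (η⁻¹ • x)

variable [FiniteDimensional ℝ E] [MeasurableSpace E] [BorelSpace E]
  {μ : Measure E} [μ.IsAddHaarMeasure]

lemma locallyIntegrable_rieszKernel [Nontrivial E] {lam : ℝ} (hlam : lam < finrank ℝ E) :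
    LocallyIntegrable (rieszKernel lam : E → ℝ) μ := by
  refine locallyIntegrable_of_norm_le_rpow (C := 1) finrank_pos hlam (.of_forall fun x => ?_)
    (measurable_norm.pow_const _).aestronglyMeasurable
  rw [Real.norm_of_nonneg (rieszKernel_nonneg lam x), one_mul, rieszKernel]

lemma convolution_mollifier (f : E → ℝ) (χ : E → F) {η : ℝ} (hη : 0 < η) (z : E) :
    (f ⋆[lsmul ℝ ℝ, μ] mollifier χ η) z =
      ((fun u => f (η • u)) ⋆[lsmul ℝ ℝ, μ] χ) (η⁻¹ • z) := by
  have change_variables := Measure.integral_comp_inv_smul_of_nonneg μ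
    (fun u => f (η • u) • χ (η⁻¹ • z - u)) hη.le
  simp only [smul_inv_smul₀ hη.ne', ← smul_sub] at change_variables
  simp only [convolution_def, mollifier, lsmul_apply, smul_comm (f _), integral_smul]
  rw [change_variables, smul_smul, Real.rpow_neg hη.le, Real.rpow_natCast,
    inv_mul_cancel₀ (by positivity), one_smul]

/-- The mollified Riesz potential `V^η = χ^η * Φ`. -/
noncomputable def mollifiedRieszPotential (μ : Measure E) (lam : ℝ) (χ : E → ℝ) (η : ℝ) : E → ℝ :=
  fun z => ∫ y, mollifier χ η (z - y) * rieszKernel lam y ∂μ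

lemma mollifiedRieszPotential_eq_smul_comp_smul (lam : ℝ) (χ : E → ℝ) {η : ℝ} (hη : 0 < η) :
    mollifiedRieszPotential μ lam χ η =
      fun z => η ^ (-lam) • (rieszKernel lam ⋆[lsmul ℝ ℝ, μ] χ) (η⁻¹ • z) := by
  have kernel_rescaled :
      (fun u : E => rieszKernel lam (η • u)) = η ^ (-lam) • rieszKernel lam :=
    funext (rieszKernel_smul lam hη.le)
  ext1 z
  calc mollifiedRieszPotential μ lam χ η z
      = (rieszKernel lam ⋆[lsmul ℝ ℝ, μ] mollifier χ η) z := by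
        simp only [mollifiedRieszPotential, convolution_def, lsmul_apply, smul_eq_mul, mul_comm]
    _ = η ^ (-lam) • (rieszKernel lam ⋆[lsmul ℝ ℝ, μ] χ) (η⁻¹ • z) := by
        rw [convolution_mollifier _ _ hη, kernel_rescaled, smul_convolution, Pi.smul_apply]

end Mollification

theorem mollified_riesz_derivative_bound_general {E : Type*} [NormedAddCommGroup E]
    [NormedSpace ℝ E] [FiniteDimensional ℝ E] [MeasurableSpace E] [BorelSpace E]
    (μ : Measure E) [μ.IsAddHaarMeasure] (k : ℕ) {lam : ℝ} (hlam0 : 0 ≤ lam)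
    (hlamd : lam < finrank ℝ E) {χ : E → ℝ} (hχ : ContDiff ℝ k χ) (hχ_supp : HasCompactSupport χ) :
    ∃ C : ℝ, 0 < C ∧ ∀ η : ℝ, 0 < η → ∀ x : E,
      ‖iteratedFDeriv ℝ k (mollifiedRieszPotential μ lam χ η) x‖
        ≤ C * η ^ (-(lam + k)) := by
  have : Nontrivial E := nontrivial_of_finrank_pos (R := ℝ) (mod_cast hlam0.trans_lt hlamd)
  have hΦ : LocallyIntegrable (rieszKernel lam) μ := locallyIntegrable_rieszKernel hlamd
  obtain ⟨C, hC⟩ := exists_norm_convolution_le_of_isBigO_one (lsmul ℝ ℝ) hΦ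
    (rieszKernel_isBigO_one hlam0) (hχ.continuous_iteratedFDeriv le_rfl)
    (hχ_supp.iteratedFDeriv k)
  refine ⟨max C 1, by positivity, fun η hη x => ?_⟩
  have hV : ContDiff ℝ k (rieszKernel lam ⋆[lsmul ℝ ℝ, μ] χ) :=
    hχ_supp.contDiff_convolution_right (n := k) _ hΦ hχ
  calc ‖iteratedFDeriv ℝ k (mollifiedRieszPotential μ lam χ η) x‖
      = ‖η ^ (-lam)‖ * ‖η⁻¹‖ ^ k *
          ‖(rieszKernel lam ⋆[lsmul ℝ ℝ, μ] iteratedFDeriv ℝ k χ) (η⁻¹ • x)‖ := by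
        rw [mollifiedRieszPotential_eq_smul_comp_smul lam χ hη,
          norm_iteratedFDeriv_smul_comp_smul hV, iteratedFDeriv_convolution_lsmul hΦ hχ_supp hχ]
    _ ≤ ‖η ^ (-lam)‖ * ‖η⁻¹‖ ^ k * max C 1 := by
        gcongr
        exact (hC _).trans (le_max_left C 1)
    _ = max C 1 * η ^ (-(lam + k)) := by
        rw [Real.norm_of_nonneg (by positivity), Real.norm_of_nonneg (by positivity), neg_add,
          Real.rpow_add hη, Real.rpow_neg hη.le (k : ℝ), Real.rpow_natCast, inv_pow, mul_comm]

/-- For `0 < λ < d` and a smooth compactly supported probability density `χ`, the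
`k`-th derivative of the mollified Riesz potential `V^η = χ^η * Φ`,
`χ^η(x) = η^{-d} χ(x/η)`, `Φ(x) = |x|^{-λ}`, satisfies
`sup_x ‖D^k V^η(x)‖ ≤ C η^{-(λ+k)}` with `C` independent of `η`. -/
theorem mollified_riesz_derivative_bound
    (d k : ℕ) (hd : 1 ≤ d) (lam : ℝ) (hlam0 : 0 < lam) (hlamd : lam < d)
    (χ : EuclideanSpace ℝ (Fin d) → ℝ)
    (hχsmooth : ContDiff ℝ (⊤ : ℕ∞) χ) (hχsupp : HasCompactSupport χ)
    (hχnonneg : ∀ x, 0 ≤ χ x) (hχint : (∫ x, χ x) = 1) :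
    ∃ C : ℝ, 0 < C ∧ ∀ η : ℝ, 0 < η → ∀ x : EuclideanSpace ℝ (Fin d),
      ‖iteratedFDeriv ℝ k
          (fun z : EuclideanSpace ℝ (Fin d) =>
            ∫ y : EuclideanSpace ℝ (Fin d),
              (η ^ (-(d : ℝ)) * χ (η⁻¹ • (z - y))) * ‖y‖ ^ (-lam)) x‖
        ≤ C * η ^ (-(lam + k)) := by
  simpa +unfoldPartialApp only [mollifiedRieszPotential, mollifier, rieszKernel, smul_eq_mul,
    finrank_euclideanSpace_fin] using
    mollified_riesz_derivative_bound_general volume k hlam0.le (by simpa using hlamd)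
      (hχsmooth.of_le (mod_cast le_top)) hχsupp
end

section
/- Let d ≥ 3, 0 < λ < d − 2, and p* = d/(d−λ). Then there exists a constant C > 0, depending only on d and λ (in particular independent of p), such that for every real p ≥ 2 and every nonnegative smooth compactly supported function w : ℝ^d → ℝ, ∫_{ℝ^d} w(x)^p ( ∫_{ℝ^d} |x−y|^{-(λ+2)} w(y) dy ) dx ≤ C ‖∇(w^{p/2})‖²_{L²(ℝ^d)} ‖w‖_{L^{p*}(ℝ^d)}. -/
open MeasureTheory

/-!
Write `n` for the dimension and `u = w ^ (p / 2)`, so that `w ^ p = u ^ 2`. With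
`1 / q = (n - 2) / n` and `1 / r = (n - λ) / n`, the Hardy–Littlewood–Sobolev inequality bounds the
left-hand side by a multiple of `‖u ^ 2‖_q ‖w‖_r`, and the Sobolev inequality bounds
`‖u ^ 2‖_q = ‖u‖²_{2n/(n-2)}` by a multiple of `‖∇u‖²_2`. Neither constant involves `p`.

For the Hardy–Littlewood–Sobolev inequality, let `∫ f ^ q ≤ 1` and `∫ g ^ r ≤ 1`. By symmetry it
suffices to integrate over the pairs `(x, y)` with `g y ^ r ≤ f x ^ q`. Fix `x` and let
`R = f x ^ (-q / n)`. For `‖x - y‖ < R` use the pointwise bound on `g`, together with `s < n`; for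
`R ≤ ‖x - y‖` use Hölder's inequality. Both parts of the potential are at most a multiple of
`f x ^ (q - 1)`, and multiplying by `f x` leaves a multiple of the integrable function `f ^ q`.
-/

open Module Set
open scoped ENNReal NNReal

section PowerOfTheNorm

variable {E : Type*} [NormedAddCommGroup E]

lemma enorm_norm_rpow_of_ne_zero {z : E} (hz : z ≠ 0) (t : ℝ) : ‖‖z‖ ^ t‖ₑ = ‖z‖ₑ ^ t := by
  rw [Real.enorm_of_nonneg (by positivity), ← ENNReal.ofReal_rpow_of_pos (norm_pos_iff.2 hz),
    ofReal_norm]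

lemma enorm_norm_rpow_le (z : E) (t : ℝ) : ‖‖z‖ ^ t‖ₑ ≤ ‖z‖ₑ ^ t := by
  rcases eq_or_ne z 0 with rfl | hz
  · rcases eq_or_ne t 0 with rfl | ht
    · simp
    · simp [Real.zero_rpow ht]
  · exact (enorm_norm_rpow_of_ne_zero hz _).le

variable [MeasurableSpace E] [BorelSpace E]

lemma setLIntegral_enorm_sub_rpow_eq_translate {μ : Measure E} [μ.IsAddLeftInvariant]
    [μ.IsNegInvariant] (J : Set ℝ≥0∞) (s : ℝ) (x : E) :
    ∫⁻ y in {y | ‖x - y‖ₑ ∈ J}, ‖x - y‖ₑ ^ (-s) ∂μ = ∫⁻ z in {z | ‖z‖ₑ ∈ J}, ‖z‖ₑ ^ (-s) ∂μ :=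
  (Measure.measurePreserving_sub_left μ x).setLIntegral_comp_preimage_emb
    (Homeomorph.subLeft x).measurableEmbedding (fun z => ‖z‖ₑ ^ (-s)) {z | ‖z‖ₑ ∈ J}

variable [NormedSpace ℝ E] [FiniteDimensional ℝ E] (μ : Measure E) [μ.IsAddHaarMeasure]

lemma setLIntegral_enorm_rpow_eq_dilate {c : ℝ} (hc : 0 < c) (S : Set E) (s : ℝ) :
    ∫⁻ z in S, ‖z‖ₑ ^ (-s) ∂μ =
      ENNReal.ofReal c ^ (finrank ℝ E - s) * ∫⁻ z in (c • ·) ⁻¹' S, ‖z‖ₑ ^ (-s) ∂μ := by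
  have hdilation : MeasurePreserving (fun z : E => c • z)
      (ENNReal.ofReal (c ^ finrank ℝ E) • μ) μ := by
    refine ⟨measurable_const_smul c, ?_⟩
    rw [Measure.map_smul, Measure.map_addHaar_smul μ hc.ne', smul_smul,
      ← ENNReal.ofReal_mul (by positivity), abs_of_pos (by positivity),
      mul_inv_cancel₀ (by positivity), ENNReal.ofReal_one, one_smul]
  have hc0 : ENNReal.ofReal c ≠ 0 := by simpa using hc
  rw [← hdilation.setLIntegral_comp_preimage_emb (measurableEmbedding_const_smul₀ hc.ne')]
  have henorm (z : E) : ‖c • z‖ₑ ^ (-s) = ENNReal.ofReal c ^ (-s) * ‖z‖ₑ ^ (-s) := by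
    rw [enorm_smul, Real.enorm_of_nonneg hc.le,
      ENNReal.mul_rpow_of_ne_top ENNReal.ofReal_ne_top enorm_ne_top]
  simp_rw [henorm]
  rw [Measure.restrict_smul, lintegral_smul_measure, smul_eq_mul,
    lintegral_const_mul' _ _ (by finiteness), ← mul_assoc,
    ENNReal.ofReal_pow hc.le, ← ENNReal.rpow_natCast,
    ← ENNReal.rpow_add _ _ hc0 ENNReal.ofReal_ne_top, sub_eq_add_neg]

variable {μ}

lemma setLIntegral_enorm_sub_rpow {R : ℝ≥0∞} (hR0 : R ≠ 0) (hRtop : R ≠ ∞) (J : Set ℝ≥0∞) (s : ℝ)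
    (x : E) :
    ∫⁻ y in {y | ‖x - y‖ₑ ∈ J}, ‖x - y‖ₑ ^ (-s) ∂μ =
      R ^ (finrank ℝ E - s) * ∫⁻ z in {z | R * ‖z‖ₑ ∈ J}, ‖z‖ₑ ^ (-s) ∂μ := by
  have hpreimage : (fun z : E => R.toReal • z) ⁻¹' {z | ‖z‖ₑ ∈ J} = {z | R * ‖z‖ₑ ∈ J} := by
    ext z
    simp [enorm_smul, Real.enorm_of_nonneg, ENNReal.ofReal_toReal hRtop]
  rw [setLIntegral_enorm_sub_rpow_eq_translate,
    setLIntegral_enorm_rpow_eq_dilate μ (ENNReal.toReal_pos hR0 hRtop), hpreimage,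
    ENNReal.ofReal_toReal hRtop]

lemma setLIntegral_enorm_lt_one_rpow_lt_top [Nontrivial E] {s : ℝ} (hs : s < finrank ℝ E) :
    ∫⁻ z in {z : E | ‖z‖ₑ < 1}, ‖z‖ₑ ^ (-s) ∂μ < ∞ := by
  have hint : IntegrableOn (fun z : E => ‖z‖ ^ (-s)) (Metric.ball 0 1) μ :=
    integrableOn_ball_of_norm_le_rpow (C := 1) (Nat.one_le_iff_ne_zero.2 finrank_pos.ne') hs
      (.of_forall fun z => by simp [Real.abs_rpow_of_nonneg])
      (by fun_prop : Measurable fun z : E => ‖z‖ ^ (-s)).aestronglyMeasurable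
  have hball : {z : E | ‖z‖ₑ < 1} = Metric.ball 0 1 := by
    ext z; simp [← ofReal_norm]
  have hkernel : ∀ᵐ z ∂μ.restrict (Metric.ball 0 1), ‖z‖ₑ ^ (-s) = ‖‖z‖ ^ (-s)‖ₑ := by
    filter_upwards [ae_restrict_of_ae (Measure.ae_ne μ (0 : E))] with z hz
    exact (enorm_norm_rpow_of_ne_zero hz _).symm
  rw [hball, lintegral_congr_ae hkernel]
  exact hint.hasFiniteIntegral

lemma setLIntegral_one_le_enorm_rpow_lt_top {s : ℝ} (hs : finrank ℝ E < s) :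
    ∫⁻ z in {z : E | 1 ≤ ‖z‖ₑ}, ‖z‖ₑ ^ (-s) ∂μ < ∞ := by
  have hs0 : 0 < s := (Nat.cast_nonneg _).trans_lt hs
  have hle (z : E) (hz : 1 ≤ ‖z‖ₑ) :
      ‖z‖ₑ ^ (-s) ≤ 2 ^ s * ENNReal.ofReal ((1 + ‖z‖) ^ (-s)) := by
    have hz1 : 1 ≤ ‖z‖ := by simpa [← ofReal_norm] using hz
    have hz0 : z ≠ 0 := norm_pos_iff.1 (by positivity)
    rw [← enorm_norm_rpow_of_ne_zero hz0, Real.enorm_of_nonneg (by positivity),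
      ← ENNReal.ofReal_ofNat, ENNReal.ofReal_rpow_of_pos two_pos,
      ← ENNReal.ofReal_mul (by positivity)]
    gcongr
    calc ‖z‖ ^ (-s) = 2 ^ s * (2 * ‖z‖) ^ (-s) := by
          rw [Real.mul_rpow two_pos.le (norm_nonneg z), ← mul_assoc, ← Real.rpow_add two_pos]
          simp
      _ ≤ 2 ^ s * (1 + ‖z‖) ^ (-s) := by
          gcongr 2 ^ s * ?_
          exact Real.rpow_le_rpow_of_nonpos (by positivity) (by linarith) (neg_nonpos.2 hs0.le)
  calc ∫⁻ z in {z : E | 1 ≤ ‖z‖ₑ}, ‖z‖ₑ ^ (-s) ∂μ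
      ≤ ∫⁻ z in {z : E | 1 ≤ ‖z‖ₑ}, 2 ^ s * ENNReal.ofReal ((1 + ‖z‖) ^ (-s)) ∂μ :=
        setLIntegral_mono (by fun_prop) hle
    _ ≤ ∫⁻ z, 2 ^ s * ENNReal.ofReal ((1 + ‖z‖) ^ (-s)) ∂μ := setLIntegral_le_lintegral _ _
    _ = 2 ^ s * ∫⁻ z, ENNReal.ofReal ((1 + ‖z‖) ^ (-s)) ∂μ :=
        lintegral_const_mul' _ _ (by finiteness)
    _ < ∞ := ENNReal.mul_lt_top (by finiteness) (finite_integral_one_add_norm hs)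

end PowerOfTheNorm

section RieszPotential

variable {E : Type*} [NormedAddCommGroup E] [MeasurableSpace E]

/-- The unnormalised Riesz potential of `g`: its convolution with the kernel `‖·‖ ^ (-s)`. It takes
values in `ℝ≥0∞`, so that no integrability is needed; for `0 < s` the kernel is `∞` at `0`. -/
noncomputable def rieszPotential (s : ℝ) (μ : Measure E) (g : E → ℝ≥0∞) (x : E) : ℝ≥0∞ :=
  ∫⁻ y, ‖x - y‖ₑ ^ (-s) * g y ∂μ

lemma rieszPotential_mul_const (s : ℝ) (μ : Measure E) (g : E → ℝ≥0∞) {c : ℝ≥0∞} (hc : c ≠ ∞)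
    (x : E) : rieszPotential s μ (fun y => g y * c) x = rieszPotential s μ g x * c := by
  simp only [rieszPotential, ← mul_assoc, lintegral_mul_const' c _ hc]

lemma rieszPotential_eq_zero_of_ae_eq_zero (s : ℝ) {μ : Measure E} {g : E → ℝ≥0∞} (hg : g =ᵐ[μ] 0)
    (x : E) : rieszPotential s μ g x = 0 := by
  refine lintegral_eq_zero_of_ae_eq_zero ?_
  filter_upwards [hg] with y hy
  simp [hy]

lemma lintegral_mul_rieszPotential_le_of_forall_le_one {q r s : ℝ} (hq : 0 < q) (hr : 0 < r)
    {μ : Measure E} {C : ℝ≥0∞}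
    (hC : ∀ f g : E → ℝ≥0∞, AEMeasurable f μ → AEMeasurable g μ →
      ∫⁻ x, f x ^ q ∂μ ≤ 1 → ∫⁻ y, g y ^ r ∂μ ≤ 1 → ∫⁻ x, f x * rieszPotential s μ g x ∂μ ≤ C)
    {f g : E → ℝ≥0∞} (hf : AEMeasurable f μ) (hg : AEMeasurable g μ)
    (hf0 : ∫⁻ x, f x ^ q ∂μ ≠ 0) (hftop : ∫⁻ x, f x ^ q ∂μ ≠ ∞)
    (hg0 : ∫⁻ y, g y ^ r ∂μ ≠ 0) (hgtop : ∫⁻ y, g y ^ r ∂μ ≠ ∞) :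
    ∫⁻ x, f x * rieszPotential s μ g x ∂μ ≤
      C * (∫⁻ x, f x ^ q ∂μ) ^ (1 / q) * (∫⁻ y, g y ^ r ∂μ) ^ (1 / r) := by
  let f₁ := ENNReal.funMulInvSnorm f q μ
  let g₁ := ENNReal.funMulInvSnorm g r μ
  have hf₁ := ENNReal.lintegral_rpow_funMulInvSnorm_eq_one hq hf0 hftop
  have hg₁ := ENNReal.lintegral_rpow_funMulInvSnorm_eq_one hr hg0 hgtop
  set A := (∫⁻ x, f x ^ q ∂μ) ^ (1 / q)
  set B := (∫⁻ y, g y ^ r ∂μ) ^ (1 / r)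
  have hA : A ≠ ∞ := by finiteness
  have hB : B ≠ ∞ := by finiteness
  have hfA : f = fun x => f₁ x * A :=
    funext fun x => ENNReal.fun_eq_funMulInvSnorm_mul_eLpNorm f hf0 hftop
  have hgB : g = fun y => g₁ y * B :=
    funext fun y => ENNReal.fun_eq_funMulInvSnorm_mul_eLpNorm g hg0 hgtop
  calc ∫⁻ x, f x * rieszPotential s μ g x ∂μ
      = ∫⁻ x, f₁ x * rieszPotential s μ g₁ x * (A * B) ∂μ := by
        refine lintegral_congr fun x => ?_
        rw [congrFun hfA x, congrArg (rieszPotential s μ · x) hgB,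
          rieszPotential_mul_const s μ _ hB]
        ring
    _ = (∫⁻ x, f₁ x * rieszPotential s μ g₁ x ∂μ) * (A * B) :=
        lintegral_mul_const' _ _ (by finiteness)
    _ ≤ C * (A * B) := by
        gcongr
        exact hC f₁ g₁ (hf.mul_const _) (hg.mul_const _) hf₁.le hg₁.le
    _ = C * A * B := (mul_assoc _ _ _).symm

variable [BorelSpace E]

section

variable [SecondCountableTopology E] {μ : Measure E}

lemma aemeasurable_mul_enorm_sub_rpow_mul {f g : E → ℝ≥0∞} (hf : AEMeasurable f μ)
    (hg : AEMeasurable g μ) (s : ℝ) :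
    AEMeasurable (fun z : E × E => f z.1 * (‖z.1 - z.2‖ₑ ^ (-s) * g z.2)) (μ.prod μ) :=
  hf.comp_fst.mul ((by fun_prop : Measurable fun z : E × E =>
    ‖z.1 - z.2‖ₑ ^ (-s)).aemeasurable.mul hg.comp_snd)

lemma lintegral_mul_rieszPotential_eq_lintegral_prod [SFinite μ] {f g : E → ℝ≥0∞}
    (hf : AEMeasurable f μ) (hg : AEMeasurable g μ) (s : ℝ) :
    ∫⁻ x, f x * rieszPotential s μ g x ∂μ =
      ∫⁻ z, f z.1 * (‖z.1 - z.2‖ₑ ^ (-s) * g z.2) ∂μ.prod μ := by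
  rw [lintegral_prod _ (aemeasurable_mul_enorm_sub_rpow_mul hf hg s)]
  refine lintegral_congr fun x => (lintegral_const_mul'' _ ?_).symm
  exact (by fun_prop : Measurable fun y => ‖x - y‖ₑ ^ (-s)).aemeasurable.mul hg

end

variable [NormedSpace ℝ E] [FiniteDimensional ℝ E] {μ : Measure E} [μ.IsAddHaarMeasure]

lemma setLIntegral_near_enorm_sub_rpow_mul_le {R M : ℝ≥0∞} (hR0 : R ≠ 0) (hRtop : R ≠ ∞)
    {T : Set E} {g : E → ℝ≥0∞} (hg : ∀ y ∈ T, g y ≤ M) (s : ℝ) (x : E) :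
    ∫⁻ y in T ∩ {y | ‖x - y‖ₑ < R}, ‖x - y‖ₑ ^ (-s) * g y ∂μ ≤
      (∫⁻ z in {z | ‖z‖ₑ < 1}, ‖z‖ₑ ^ (-s) ∂μ) * (R ^ (finrank ℝ E - s) * M) := by
  have hscale : {z : E | R * ‖z‖ₑ ∈ Iio R} = {z | ‖z‖ₑ < 1} := by
    ext z
    simpa using ENNReal.mul_lt_mul_iff_right (b := ‖z‖ₑ) (c := 1) hR0 hRtop
  calc ∫⁻ y in T ∩ {y | ‖x - y‖ₑ < R}, ‖x - y‖ₑ ^ (-s) * g y ∂μ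
      ≤ ∫⁻ y in T ∩ {y | ‖x - y‖ₑ < R}, ‖x - y‖ₑ ^ (-s) * M ∂μ :=
        setLIntegral_mono (by fun_prop) fun y hy => by gcongr; exact hg y hy.1
    _ ≤ ∫⁻ y in {y | ‖x - y‖ₑ < R}, ‖x - y‖ₑ ^ (-s) * M ∂μ := lintegral_mono_set inter_subset_right
    _ = (∫⁻ y in {y | ‖x - y‖ₑ ∈ Iio R}, ‖x - y‖ₑ ^ (-s) ∂μ) * M :=
        lintegral_mul_const _ (by fun_prop)
    _ = _ := by
        rw [setLIntegral_enorm_sub_rpow hR0 hRtop, hscale]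
        ring

lemma setLIntegral_far_enorm_sub_rpow_mul_le {R : ℝ≥0∞} (hR0 : R ≠ 0) (hRtop : R ≠ ∞)
    {r r' : ℝ} (hr : r'.HolderConjugate r) {g : E → ℝ≥0∞} (hg : AEMeasurable g μ) (s : ℝ) (x : E) :
    ∫⁻ y in {y | R ≤ ‖x - y‖ₑ}, ‖x - y‖ₑ ^ (-s) * g y ∂μ ≤
      (∫⁻ z in {z | 1 ≤ ‖z‖ₑ}, ‖z‖ₑ ^ (-(s * r')) ∂μ) ^ (1 / r') *
        (R ^ (finrank ℝ E / r' - s) * (∫⁻ y, g y ^ r ∂μ) ^ (1 / r)) := by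
  have hscale : {z : E | R * ‖z‖ₑ ∈ Ici R} = {z | 1 ≤ ‖z‖ₑ} := by
    ext z
    simpa using ENNReal.mul_le_mul_iff_right (b := 1) (c := ‖z‖ₑ) hR0 hRtop
  have hkernel : ∫⁻ y in {y | R ≤ ‖x - y‖ₑ}, (‖x - y‖ₑ ^ (-s)) ^ r' ∂μ =
      R ^ (finrank ℝ E - s * r') * ∫⁻ z in {z | 1 ≤ ‖z‖ₑ}, ‖z‖ₑ ^ (-(s * r')) ∂μ := by
    simp_rw [← ENNReal.rpow_mul, neg_mul, ← hscale]
    exact setLIntegral_enorm_sub_rpow hR0 hRtop (Ici R) (s * r') x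
  calc ∫⁻ y in {y | R ≤ ‖x - y‖ₑ}, ‖x - y‖ₑ ^ (-s) * g y ∂μ
      ≤ (∫⁻ y in {y | R ≤ ‖x - y‖ₑ}, (‖x - y‖ₑ ^ (-s)) ^ r' ∂μ) ^ (1 / r') *
          (∫⁻ y in {y | R ≤ ‖x - y‖ₑ}, g y ^ r ∂μ) ^ (1 / r) :=
        ENNReal.lintegral_mul_le_Lp_mul_Lq _ hr (by fun_prop) hg.restrict
    _ ≤ (R ^ (finrank ℝ E - s * r') * ∫⁻ z in {z | 1 ≤ ‖z‖ₑ}, ‖z‖ₑ ^ (-(s * r')) ∂μ) ^ (1 / r') *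
          (∫⁻ y, g y ^ r ∂μ) ^ (1 / r) := by
        have := hr.symm.pos
        rw [hkernel]
        gcongr
        exact Measure.restrict_le_self
    _ = _ := by
        have hr'0 : r' ≠ 0 := hr.pos.ne'
        rw [ENNReal.mul_rpow_of_nonneg _ _ (by have := hr.pos; positivity), ← ENNReal.rpow_mul,
          show (finrank ℝ E - s * r') * (1 / r') = finrank ℝ E / r' - s by field_simp]
        ring

variable (μ)

lemma exists_rieszPotential_restrict_le {r r' s : ℝ} (hr : r'.HolderConjugate r)
    (hrs : finrank ℝ E / r' < s) (hs : s < finrank ℝ E) :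
    ∃ C : ℝ≥0, ∀ g : E → ℝ≥0∞, AEMeasurable g μ → ∫⁻ y, g y ^ r ∂μ ≤ 1 →
      ∀ R : ℝ≥0∞, R ≠ 0 → R ≠ ∞ → ∀ T : Set E, (∀ y ∈ T, g y ≤ R ^ (-(finrank ℝ E / r))) →
      ∀ x, rieszPotential s (μ.restrict T) g x ≤ C * R ^ (finrank ℝ E / r' - s) := by
  have hr0 : 0 < r := hr.symm.pos
  have hr'0 : 0 < r' := hr.pos
  have hnontrivial : Nontrivial E := by
    have : (0 : ℝ) ≤ finrank ℝ E / r' := by positivity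
    exact nontrivial_of_finrank_pos (R := ℝ) (by exact_mod_cast this.trans_lt (hrs.trans hs))
  have hnear := setLIntegral_enorm_lt_one_rpow_lt_top (μ := μ) hs
  have hfar := setLIntegral_one_le_enorm_rpow_lt_top (μ := μ) ((div_lt_iff₀ hr'0).1 hrs)
  set A := ∫⁻ z in {z : E | ‖z‖ₑ < 1}, ‖z‖ₑ ^ (-s) ∂μ
  set B := ∫⁻ z in {z : E | 1 ≤ ‖z‖ₑ}, ‖z‖ₑ ^ (-(s * r')) ∂μ
  have hconst : A + B ^ (1 / r') ≠ ∞ := by finiteness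
  refine ⟨(A + B ^ (1 / r')).toNNReal, fun g hg hg1 R hR0 hRtop T hT x => ?_⟩
  rw [ENNReal.coe_toNNReal hconst]
  calc rieszPotential s (μ.restrict T) g x
      = ∫⁻ y in T ∩ {y | ‖x - y‖ₑ < R}, ‖x - y‖ₑ ^ (-s) * g y ∂μ +
          ∫⁻ y in T \ {y | ‖x - y‖ₑ < R}, ‖x - y‖ₑ ^ (-s) * g y ∂μ :=
        (lintegral_inter_add_sdiff _ _ (measurableSet_lt (by fun_prop) (by fun_prop))).symm
    _ ≤ A * (R ^ (finrank ℝ E - s) * R ^ (-(finrank ℝ E / r))) +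
          B ^ (1 / r') * (R ^ (finrank ℝ E / r' - s) * (∫⁻ y, g y ^ r ∂μ) ^ (1 / r)) := by
        gcongr ?_ + ?_
        · exact setLIntegral_near_enorm_sub_rpow_mul_le hR0 hRtop hT s x
        · exact (lintegral_mono_set fun y hy => by simpa using hy.2).trans
            (setLIntegral_far_enorm_sub_rpow_mul_le hR0 hRtop hr hg s x)
    _ ≤ A * R ^ (finrank ℝ E / r' - s) + B ^ (1 / r') * (R ^ (finrank ℝ E / r' - s) * 1) := by
        gcongr
        · rw [← ENNReal.rpow_add _ _ hR0 hRtop]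
          refine le_of_eq (congrArg _ ?_)
          linear_combination -(finrank ℝ E : ℝ) * hr.inv_add_inv_eq_one
        · exact ENNReal.rpow_le_one hg1 (by positivity)
    _ = (A + B ^ (1 / r')) * R ^ (finrank ℝ E / r' - s) := by ring

lemma exists_mul_rieszPotential_sublevel_le {q r s : ℝ} (hq : 1 < q) (hr : 1 < r)
    (hs : s < finrank ℝ E) (hqrs : 1 / q + 1 / r + s / finrank ℝ E = 2) :
    ∃ C : ℝ≥0, ∀ g : E → ℝ≥0∞, AEMeasurable g μ → ∫⁻ y, g y ^ r ∂μ ≤ 1 →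
      ∀ t : ℝ≥0∞, t ≠ ∞ →
      ∀ x, t * rieszPotential s (μ.restrict {y | g y ^ r ≤ t ^ q}) g x ≤ C * t ^ q := by
  have hq0 : 0 < q := by positivity
  have hr0 : 0 < r := by positivity
  have hconj := (Real.HolderConjugate.conjExponent hr).symm
  set r' := Real.conjExponent r
  have hinv : 1 / r' = 1 - 1 / r := by
    simpa only [one_div] using eq_sub_of_add_eq hconj.inv_add_inv_eq_one
  have hqinv : 1 / q < 1 := (div_lt_one hq0).2 hq
  have hrinv : 1 / r < 1 := (div_lt_one hr0).2 hr
  have hn : (0 : ℝ) < finrank ℝ E := by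
    refine (Nat.cast_nonneg _).lt_of_ne fun h => ?_
    rw [← h, div_zero] at hqrs
    linarith
  have hrs : finrank ℝ E / r' < s := by
    rw [div_eq_mul_one_div, ← lt_div_iff₀' hn]
    linarith
  obtain ⟨C, hC⟩ := exists_rieszPotential_restrict_le μ hconj hrs hs
  refine ⟨C, fun g hg hg1 t httop x => ?_⟩
  rcases eq_or_ne t 0 with rfl | ht0
  · simp
  -- The radius at which the near and the far part of the potential balance.
  set R := t ^ (-(q / finrank ℝ E))
  have hsublevel (y : E) (hy : g y ^ r ≤ t ^ q) : g y ≤ R ^ (-(finrank ℝ E / r)) := by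
    rw [← ENNReal.rpow_mul, show -(q / finrank ℝ E) * -(finrank ℝ E / r) = q * r⁻¹ by field_simp,
      ENNReal.rpow_mul, ENNReal.le_rpow_inv_iff hr0]
    exact hy
  have hexponent : -(q / finrank ℝ E) * (finrank ℝ E / r' - s) = q - 1 := by
    calc -(q / finrank ℝ E) * (finrank ℝ E / r' - s) = q * (s / finrank ℝ E - 1 / r') := by
          field_simp
          ring
      _ = q * (1 - 1 / q) := by
          congr 1
          linarith
      _ = q - 1 := by field_simp
  calc t * rieszPotential s (μ.restrict {y | g y ^ r ≤ t ^ q}) g x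
      ≤ t * (C * R ^ (finrank ℝ E / r' - s)) := by
        gcongr
        exact hC g hg hg1 R (by simp [R, ht0, httop]) (by simp [R, ht0, httop]) _ hsublevel x
    _ = C * (t ^ (1 : ℝ) * t ^ (q - 1)) := by
        rw [← ENNReal.rpow_mul, hexponent, ENNReal.rpow_one]
        ring
    _ = C * t ^ q := by rw [← ENNReal.rpow_add _ _ ht0 httop, add_sub_cancel]

lemma exists_setLIntegral_prod_sublevel_le {q r s : ℝ} (hq : 1 < q) (hr : 1 < r)
    (hs : s < finrank ℝ E) (hqrs : 1 / q + 1 / r + s / finrank ℝ E = 2) :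
    ∃ C : ℝ≥0, ∀ f g : E → ℝ≥0∞, AEMeasurable f μ → AEMeasurable g μ →
      ∫⁻ x, f x ^ q ∂μ ≤ 1 → ∫⁻ y, g y ^ r ∂μ ≤ 1 →
      ∫⁻ z in {z : E × E | g z.2 ^ r ≤ f z.1 ^ q},
        f z.1 * (‖z.1 - z.2‖ₑ ^ (-s) * g z.2) ∂μ.prod μ ≤ C := by
  obtain ⟨C, hC⟩ := exists_mul_rieszPotential_sublevel_le μ hq hr hs hqrs
  refine ⟨C, fun f g hf hg hf1 hg1 => ?_⟩
  have hfinite : ∀ᵐ x ∂μ, f x ≠ ∞ := by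
    filter_upwards [ae_lt_top' (hf.pow_const q) (hf1.trans_lt ENNReal.one_lt_top).ne] with x hx
    exact fun h => hx.ne (by simp [h, zero_lt_one.trans hq])
  have hsection : ∀ᵐ x ∂μ, ∫⁻ y, {z : E × E | g z.2 ^ r ≤ f z.1 ^ q}.indicator
      (fun z => f z.1 * (‖z.1 - z.2‖ₑ ^ (-s) * g z.2)) (x, y) ∂μ ≤ C * f x ^ q := by
    filter_upwards [hfinite] with x hx
    calc _ ≤ ∫⁻ y in {y | g y ^ r ≤ f x ^ q}, f x * (‖x - y‖ₑ ^ (-s) * g y) ∂μ :=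
          lintegral_indicator_le _ {y | g y ^ r ≤ f x ^ q}
      _ = f x * rieszPotential s (μ.restrict {y | g y ^ r ≤ f x ^ q}) g x :=
          lintegral_const_mul' _ _ hx
      _ ≤ C * f x ^ q := hC g hg hg1 (f x) hx x
  rw [← lintegral_indicator₀
    (nullMeasurableSet_le (hg.comp_snd.pow_const r) (hf.comp_fst.pow_const q))]
  calc _ ≤ ∫⁻ x, ∫⁻ y, {z : E × E | g z.2 ^ r ≤ f z.1 ^ q}.indicator
          (fun z => f z.1 * (‖z.1 - z.2‖ₑ ^ (-s) * g z.2)) (x, y) ∂μ ∂μ := lintegral_prod_le _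
    _ ≤ ∫⁻ x, C * f x ^ q ∂μ := lintegral_mono_ae hsection
    _ = C * ∫⁻ x, f x ^ q ∂μ := lintegral_const_mul' _ _ ENNReal.coe_ne_top
    _ ≤ C := mul_le_of_le_one_right' hf1

lemma exists_lintegral_mul_rieszPotential_le_of_le_one {q r s : ℝ} (hq : 1 < q) (hr : 1 < r)
    (hs : s < finrank ℝ E) (hqrs : 1 / q + 1 / r + s / finrank ℝ E = 2) :
    ∃ C : ℝ≥0, ∀ f g : E → ℝ≥0∞, AEMeasurable f μ → AEMeasurable g μ →
      ∫⁻ x, f x ^ q ∂μ ≤ 1 → ∫⁻ y, g y ^ r ∂μ ≤ 1 →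
      ∫⁻ x, f x * rieszPotential s μ g x ∂μ ≤ C := by
  obtain ⟨C₁, hC₁⟩ := exists_setLIntegral_prod_sublevel_le μ hq hr hs hqrs
  obtain ⟨C₂, hC₂⟩ := exists_setLIntegral_prod_sublevel_le μ hr hq hs
    (by rwa [add_comm (1 / r)])
  refine ⟨C₁ + C₂, fun f g hf hg hf1 hg1 => ?_⟩
  let F : E × E → ℝ≥0∞ := fun z => f z.1 * (‖z.1 - z.2‖ₑ ^ (-s) * g z.2)
  have hcover : {z : E × E | g z.2 ^ r ≤ f z.1 ^ q} ∪ {z | f z.1 ^ q ≤ g z.2 ^ r} = univ :=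
    eq_univ_of_forall fun z => by simp only [mem_union, mem_ofPred_eq, le_total]
  have hswap : ∫⁻ z in {z : E × E | f z.1 ^ q ≤ g z.2 ^ r}, F z ∂μ.prod μ =
      ∫⁻ z in {z : E × E | f z.2 ^ q ≤ g z.1 ^ r},
        g z.1 * (‖z.1 - z.2‖ₑ ^ (-s) * f z.2) ∂μ.prod μ := by
    rw [← Measure.measurePreserving_swap.setLIntegral_comp_preimage_emb
      MeasurableEquiv.prodComm.measurableEmbedding]
    refine lintegral_congr fun z => ?_
    simp only [F, Prod.fst_swap, Prod.snd_swap, enorm_sub_rev z.2 z.1]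
    ring
  calc ∫⁻ x, f x * rieszPotential s μ g x ∂μ
      = ∫⁻ z in {z : E × E | g z.2 ^ r ≤ f z.1 ^ q} ∪ {z | f z.1 ^ q ≤ g z.2 ^ r},
          F z ∂μ.prod μ := by
        rw [hcover, setLIntegral_univ, lintegral_mul_rieszPotential_eq_lintegral_prod hf hg]
    _ ≤ ∫⁻ z in {z : E × E | g z.2 ^ r ≤ f z.1 ^ q}, F z ∂μ.prod μ +
          ∫⁻ z in {z : E × E | f z.1 ^ q ≤ g z.2 ^ r}, F z ∂μ.prod μ := lintegral_union_le _ _ _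
    _ ≤ C₁ + C₂ := by
        rw [hswap]
        exact add_le_add (hC₁ f g hf hg hf1 hg1) (hC₂ g f hg hf hg1 hf1)
    _ = (C₁ + C₂ : ℝ≥0) := (ENNReal.coe_add _ _).symm

theorem exists_lintegral_mul_rieszPotential_le {q r s : ℝ} (hq : 1 < q) (hr : 1 < r)
    (hs : s < finrank ℝ E) (hqrs : 1 / q + 1 / r + s / finrank ℝ E = 2) :
    ∃ C : ℝ≥0, ∀ f g : E → ℝ≥0∞, AEMeasurable f μ → AEMeasurable g μ →
      ∫⁻ x, f x * rieszPotential s μ g x ∂μ ≤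
        C * (∫⁻ x, f x ^ q ∂μ) ^ (1 / q) * (∫⁻ y, g y ^ r ∂μ) ^ (1 / r) := by
  have hq0 : 0 < q := by positivity
  have hr0 : 0 < r := by positivity
  obtain ⟨C, hC⟩ := exists_lintegral_mul_rieszPotential_le_of_le_one μ hq hr hs hqrs
  -- Enlarging `C` to `C + 1` excludes the product `0 * ∞` on the right-hand side.
  refine ⟨C + 1, fun f g hf hg => ?_⟩
  by_cases hf0 : ∫⁻ x, f x ^ q ∂μ = 0
  · have hf_ae := ENNReal.ae_eq_zero_of_lintegral_rpow_eq_zero hq0.le hf hf0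
    rw [lintegral_eq_zero_of_ae_eq_zero (hf_ae.mono fun x hx => by simp [hx])]
    exact zero_le
  by_cases hg0 : ∫⁻ y, g y ^ r ∂μ = 0
  · have hg_ae := ENNReal.ae_eq_zero_of_lintegral_rpow_eq_zero hr0.le hg hg0
    simp [rieszPotential_eq_zero_of_ae_eq_zero s hg_ae]
  by_cases hftop : ∫⁻ x, f x ^ q ∂μ = ∞
  · have hgnorm : (∫⁻ y, g y ^ r ∂μ) ^ (1 / r) ≠ 0 := by simp [hg0, hr0.le]
    rw [hftop, ENNReal.top_rpow_of_pos (by positivity), ENNReal.mul_top (by simp),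
      ENNReal.top_mul hgnorm]
    exact le_top
  by_cases hgtop : ∫⁻ y, g y ^ r ∂μ = ∞
  · have hfnorm : (∫⁻ x, f x ^ q ∂μ) ^ (1 / q) ≠ 0 := by simp [hf0, hq0.le]
    rw [hgtop, ENNReal.top_rpow_of_pos (by positivity),
      ENNReal.mul_top (mul_ne_zero (by simp) hfnorm)]
    exact le_top
  refine lintegral_mul_rieszPotential_le_of_forall_le_one hq0 hr0
    (fun f g hf hg hf1 hg1 => (hC f g hf hg hf1 hg1).trans ?_) hf hg hf0 hftop hg0 hgtop
  exact_mod_cast le_self_add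

end RieszPotential

section Sobolev

variable {E : Type*} [NormedAddCommGroup E] [NormedSpace ℝ E] [FiniteDimensional ℝ E]
  [MeasurableSpace E] [BorelSpace E] (μ : Measure E) [μ.IsAddHaarMeasure]
  (F : Type*) [NormedAddCommGroup F] [InnerProductSpace ℝ F]

lemma exists_lintegral_enorm_rpow_le_lintegral_enorm_fderiv_rpow {m : ℝ} (hm : 1 ≤ m)
    (hmn : m < finrank ℝ E) :
    ∃ C : ℝ≥0, ∀ u : E → F, ContDiff ℝ 1 u → HasCompactSupport u →
      (∫⁻ x, ‖u x‖ₑ ^ (m * finrank ℝ E / (finrank ℝ E - m)) ∂μ) ^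
          ((finrank ℝ E - m) / finrank ℝ E) ≤
        C * ∫⁻ x, ‖fderiv ℝ u x‖ₑ ^ m ∂μ := by
  have hm0 : 0 < m := by positivity
  have hn : (0 : ℝ) < finrank ℝ E := hm0.trans hmn
  have hnm : 0 < finrank ℝ E - m := sub_pos.2 hmn
  lift m to ℝ≥0 using hm0.le
  obtain ⟨m', hm'⟩ : ∃ m' : ℝ≥0, (m' : ℝ) = m * finrank ℝ E / (finrank ℝ E - m) :=
    ⟨⟨_, by positivity⟩, rfl⟩
  have hm'0 : m' ≠ 0 := by
    rw [← NNReal.coe_ne_zero, hm']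
    positivity
  have hsobolev : (m' : ℝ)⁻¹ = (m : ℝ)⁻¹ - (finrank ℝ E : ℝ)⁻¹ := by
    rw [hm']
    field_simp
  have hratio : (m' : ℝ) * ((finrank ℝ E - m) / finrank ℝ E) = m := by
    rw [hm']
    field_simp
  refine ⟨eLpNormLESNormFDerivOfEqInnerConst μ m ^ (m : ℝ), fun u hu huc => ?_⟩
  rw [← hm', ← eLpNorm_nnreal_pow_eq_lintegral hm'0, ← ENNReal.rpow_mul, hratio,
    ← eLpNorm_nnreal_pow_eq_lintegral (by exact_mod_cast hm0.ne'),
    ENNReal.coe_rpow_of_nonneg _ hm0.le, ← ENNReal.mul_rpow_of_nonneg _ _ hm0.le]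
  gcongr
  exact eLpNorm_le_eLpNorm_fderiv_of_eq_inner μ hu huc (by exact_mod_cast hm)
    (by exact_mod_cast hn) (by exact_mod_cast hsobolev)

lemma exists_lintegral_enorm_rpow_mul_rieszPotential_le {m lam : ℝ} (hm : 1 ≤ m) (hlam : 0 < lam)
    (hlamn : lam + m < finrank ℝ E) :
    ∃ C : ℝ≥0, ∀ u : E → F, ContDiff ℝ 1 u → HasCompactSupport u →
      ∀ g : E → ℝ≥0∞, AEMeasurable g μ →
      ∫⁻ x, ‖u x‖ₑ ^ m * rieszPotential (lam + m) μ g x ∂μ ≤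
        C * (∫⁻ x, ‖fderiv ℝ u x‖ₑ ^ m ∂μ) *
          (∫⁻ y, g y ^ (finrank ℝ E / (finrank ℝ E - lam)) ∂μ) ^
            ((finrank ℝ E - lam) / finrank ℝ E) := by
  have hn : (0 : ℝ) < finrank ℝ E := by linarith
  have hnm : 0 < finrank ℝ E - m := by linarith
  have hnlam : 0 < finrank ℝ E - lam := by linarith
  obtain ⟨C₁, hC₁⟩ := exists_lintegral_mul_rieszPotential_le μ
    (q := finrank ℝ E / (finrank ℝ E - m)) (r := finrank ℝ E / (finrank ℝ E - lam)) (s := lam + m)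
    ((one_lt_div hnm).2 (by linarith)) ((one_lt_div hnlam).2 (by linarith)) hlamn
    (by field_simp; ring)
  obtain ⟨C₂, hC₂⟩ :=
    exists_lintegral_enorm_rpow_le_lintegral_enorm_fderiv_rpow μ F hm (by linarith)
  refine ⟨C₁ * C₂, fun u hu huc g hg => ?_⟩
  have hHLS := hC₁ (fun x => ‖u x‖ₑ ^ m) g
    (hu.continuous.enorm.measurable.pow_const m).aemeasurable hg
  simp_rw [← ENNReal.rpow_mul, one_div_div, ← mul_div_assoc] at hHLS
  refine hHLS.trans ?_
  rw [ENNReal.coe_mul, mul_assoc (C₁ : ℝ≥0∞) C₂]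
  gcongr
  exact hC₂ u hu huc

end Sobolev

section RealValued

variable {E : Type*} [NormedAddCommGroup E] [MeasurableSpace E] {μ : Measure E}

lemma ofReal_integral_mul_integral_norm_sub_rpow_mul_le (s : ℝ) (f g : E → ℝ) :
    ENNReal.ofReal (∫ x, f x * ∫ y, ‖x - y‖ ^ (-s) * g y ∂μ ∂μ) ≤
      ∫⁻ x, ‖f x‖ₑ * rieszPotential s μ (‖g ·‖ₑ) x ∂μ := by
  refine (Real.ofReal_le_enorm _).trans ((enorm_integral_le_lintegral_enorm _).trans ?_)
  simp_rw [enorm_mul]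
  gcongr with x
  refine (enorm_integral_le_lintegral_enorm _).trans ?_
  simp_rw [enorm_mul]
  exact lintegral_mono fun y => by gcongr; exact enorm_norm_rpow_le _ _

variable [OpensMeasurableSpace E] [IsFiniteMeasureOnCompacts μ]

lemma lintegral_enorm_rpow_eq_ofReal_integral {F : Type*} [NormedAddCommGroup F] {h : E → F}
    (hh : Continuous h) (hhc : HasCompactSupport h) {t : ℝ} (ht : 0 < t) :
    ∫⁻ x, ‖h x‖ₑ ^ t ∂μ = ENNReal.ofReal (∫ x, ‖h x‖ ^ t ∂μ) := by
  have hint : Integrable (fun x => ‖h x‖ ^ t) μ :=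
    (hh.norm.rpow_const fun _ => .inr ht.le).integrable_of_hasCompactSupport
      (hhc.comp_left (g := fun z => ‖z‖ ^ t) (by simp [ht.ne']))
  rw [ofReal_integral_eq_lintegral_ofReal hint (.of_forall fun x => by positivity)]
  simp_rw [← ofReal_norm, ENNReal.ofReal_rpow_of_nonneg (norm_nonneg _) ht.le]

end RealValued

section HLSSobolev

variable {E : Type*} [NormedAddCommGroup E] [NormedSpace ℝ E] [FiniteDimensional ℝ E]
  [MeasurableSpace E] [BorelSpace E] (μ : Measure E) [μ.IsAddHaarMeasure]

lemma exists_integral_norm_rpow_mul_integral_norm_sub_rpow_mul_le (F : Type*)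
    [NormedAddCommGroup F] [InnerProductSpace ℝ F] {m lam : ℝ} (hm : 1 ≤ m) (hlam : 0 < lam)
    (hlamn : lam + m < finrank ℝ E) :
    ∃ C : ℝ, 0 < C ∧ ∀ u : E → F, ContDiff ℝ 1 u → HasCompactSupport u →
      ∀ g : E → ℝ, Continuous g → HasCompactSupport g →
      (∫ x, ‖u x‖ ^ m * ∫ y, ‖x - y‖ ^ (-(lam + m)) * g y ∂μ ∂μ) ≤
        C * (∫ x, ‖fderiv ℝ u x‖ ^ m ∂μ) *
          (∫ y, ‖g y‖ ^ (finrank ℝ E / (finrank ℝ E - lam)) ∂μ) ^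
            ((finrank ℝ E - lam) / finrank ℝ E) := by
  have hm0 : 0 < m := by positivity
  have hr : 0 < finrank ℝ E / (finrank ℝ E - lam) := div_pos (by linarith) (by linarith)
  have hr' : 0 ≤ (finrank ℝ E - lam) / finrank ℝ E := div_nonneg (by linarith) (by positivity)
  obtain ⟨C, hC⟩ := exists_lintegral_enorm_rpow_mul_rieszPotential_le μ F hm hlam hlamn
  refine ⟨C + 1, by positivity, fun u hu huc g hg hgc => ?_⟩
  refine (ENNReal.ofReal_le_ofReal_iff (by positivity)).1 ?_
  calc ENNReal.ofReal (∫ x, ‖u x‖ ^ m * ∫ y, ‖x - y‖ ^ (-(lam + m)) * g y ∂μ ∂μ)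
      ≤ ∫⁻ x, ‖‖u x‖ ^ m‖ₑ * rieszPotential (lam + m) μ (‖g ·‖ₑ) x ∂μ :=
        ofReal_integral_mul_integral_norm_sub_rpow_mul_le (lam + m) _ g
    _ = ∫⁻ x, ‖u x‖ₑ ^ m * rieszPotential (lam + m) μ (‖g ·‖ₑ) x ∂μ := by
        simp_rw [Real.enorm_rpow_of_nonneg (norm_nonneg _) hm0.le, enorm_norm]
    _ ≤ C * (∫⁻ x, ‖fderiv ℝ u x‖ₑ ^ m ∂μ) *
          (∫⁻ y, ‖g y‖ₑ ^ (finrank ℝ E / (finrank ℝ E - lam)) ∂μ) ^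
            ((finrank ℝ E - lam) / finrank ℝ E) :=
        hC u hu huc _ hg.enorm.measurable.aemeasurable
    _ = ENNReal.ofReal (C * (∫ x, ‖fderiv ℝ u x‖ ^ m ∂μ) *
          (∫ y, ‖g y‖ ^ (finrank ℝ E / (finrank ℝ E - lam)) ∂μ) ^
            ((finrank ℝ E - lam) / finrank ℝ E)) := by
        rw [lintegral_enorm_rpow_eq_ofReal_integral (hu.continuous_fderiv one_ne_zero)
            (huc.fderiv ℝ) hm0,
          lintegral_enorm_rpow_eq_ofReal_integral hg hgc hr,
          ENNReal.ofReal_rpow_of_nonneg (by positivity) hr', ← ENNReal.ofReal_coe_nnreal,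
          ← ENNReal.ofReal_mul (by positivity), ← ENNReal.ofReal_mul (by positivity)]
    _ ≤ _ := by
        gcongr
        exact le_add_of_nonneg_right zero_le_one

theorem hls_sobolev_estimate_general {m lam : ℝ} (hm : 1 ≤ m) (hlam : 0 < lam)
    (hlamn : lam + m < finrank ℝ E) :
    ∃ C : ℝ, 0 < C ∧ ∀ p : ℝ, m ≤ p → ∀ w : E → ℝ,
      ContDiff ℝ 1 w → HasCompactSupport w → (∀ x, 0 ≤ w x) →
      (∫ x, w x ^ p * ∫ y, ‖x - y‖ ^ (-(lam + m)) * w y ∂μ ∂μ) ≤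
        C * (∫ x, ‖fderiv ℝ (fun z => w z ^ (p / m)) x‖ ^ m ∂μ) *
          (∫ x, w x ^ (finrank ℝ E / (finrank ℝ E - lam)) ∂μ) ^
            ((finrank ℝ E - lam) / finrank ℝ E) := by
  have hm0 : 0 < m := by positivity
  obtain ⟨C, hC0, hC⟩ :=
    exists_integral_norm_rpow_mul_integral_norm_sub_rpow_mul_le μ ℝ hm hlam hlamn
  refine ⟨C, hC0, fun p hp w hw hwc hw0 => ?_⟩
  have hpm : 1 ≤ p / m := (one_le_div hm0).2 hp
  have hu : ContDiff ℝ 1 fun z => w z ^ (p / m) := hw.rpow_const_of_le (m := 1) (by simpa)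
  have huc : HasCompactSupport fun z => w z ^ (p / m) :=
    hwc.comp_left (g := fun t : ℝ => t ^ (p / m)) (Real.zero_rpow (by positivity))
  have hpow (x : E) : ‖w x ^ (p / m)‖ ^ m = w x ^ p := by
    rw [Real.norm_rpow_of_nonneg (hw0 x), Real.norm_of_nonneg (hw0 x), ← Real.rpow_mul (hw0 x),
      div_mul_cancel₀ p hm0.ne']
  have h := hC _ hu huc w hw.continuous hwc
  simp_rw [hpow, Real.norm_of_nonneg (hw0 _)] at h
  exact h

end HLSSobolev

/-- Combined Hardy–Littlewood–Sobolev and Sobolev estimate: for `d ≥ 3`,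
`0 < λ < d-2`, `p* = d/(d-λ)`, there is `C = C(d,λ)` (independent of `p`) such that for
every real `p ≥ 2` and nonnegative smooth compactly supported `w`,
`∫ w^p (∫ |x-y|^{-(λ+2)} w(y) dy) dx ≤ C ‖∇(w^{p/2})‖²_{L²} ‖w‖_{L^{p*}}`. -/
theorem hls_sobolev_estimate
    (d : ℕ) (hd : 3 ≤ d) (lam : ℝ) (hlam0 : 0 < lam) (hlamd : lam < (d : ℝ) - 2) :
    ∃ C : ℝ, 0 < C ∧
      ∀ (p : ℝ), 2 ≤ p →
      ∀ w : EuclideanSpace ℝ (Fin d) → ℝ,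
        ContDiff ℝ (⊤ : ℕ∞) w → HasCompactSupport w → (∀ x, 0 ≤ w x) →
        (∫ x, w x ^ p * ∫ y, ‖x - y‖ ^ (-(lam + 2)) * w y)
          ≤ C * (∫ x, ‖fderiv ℝ (fun z => w z ^ (p / 2)) x‖ ^ 2)
              * (∫ x, w x ^ ((d : ℝ) / ((d : ℝ) - lam))) ^ (((d : ℝ) - lam) / (d : ℝ)) := by
  obtain ⟨C, hC, h⟩ := hls_sobolev_estimate_general (volume : Measure (EuclideanSpace ℝ (Fin d)))
    one_le_two hlam0 (by simpa using lt_sub_iff_add_lt.1 hlamd)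
  exact ⟨C, hC, fun p hp w hw hwc hw0 => by
    simpa using h p hp w (hw.of_le (by exact_mod_cast le_top)) hwc hw0⟩
end
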